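/- Let ν be a probability measure on 𝕋 with a density (still denoted ν) with respect to λ that is a-Hölder with constant A, i.e. |ν(x)−ν(y)| ≤ A d(x,y)^a for all x,y, where a ∈ (0,1] and A > 0. Take p = 2, so the generator is L_{α,β}f(x) = ½ f''(x) + α^{−1} ∫_𝕋 [f(x + αβ·⟨y−x⟩) − f(x)] ν(dy). Then there exists a constant C > 0, depending only on A, such that for every β ≥ 1 and every α ∈ (0, 1/(2β²)) there exists a bounded measurable function h : 𝕋 → ℝ with ∫_𝕋 L_{α,β}φ dμ_β = ∫_𝕋 φ·h dμ_β for all φ ∈ C²(𝕋), and with sup_x |h(x)| ≤ C·max(αβ⁴, α^a β^{1+a}). -/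

import Mathlib

open MeasureTheory Real Set Filter

noncomputable section

instance : Fact (0 < 2 * π) := ⟨Real.two_pi_pos⟩

/-- The circle `𝕋 = ℝ/(2πℤ)`. -/
abbrev 𝕋 : Type := AddCircle (2 * π)

/-- The normalized Haar probability measure `λ` on the circle. -/
def lam : Measure 𝕋 := (ENNReal.ofReal (2 * π))⁻¹ • volume

/-- The representative of a point of the circle in `(-π, π]`. -/
def rep (z : 𝕋) : ℝ := ((AddCircle.equivIoc (2 * π) (-π) z : Set.Ioc (-π) (-π + 2 * π)) : ℝ)

/-- The potential `U₂(x) = ∫ d(x,y)² ν(dy)`. -/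
def U2 (ν : Measure 𝕋) (x : 𝕋) : ℝ := ∫ y, dist x y ^ 2 ∂ν

/-- The normalizing constant `Z_β = ∫ exp(-β U₂) dλ`. -/
def Z2 (ν : Measure 𝕋) (β : ℝ) : ℝ := ∫ x, Real.exp (-β * U2 ν x) ∂lam

/-- The Gibbs measure `μ_β` with density `exp(-β U₂)/Z_β` w.r.t. `λ`. -/
def gibbs2 (ν : Measure 𝕋) (β : ℝ) : Measure 𝕋 :=
  lam.withDensity fun x => ENNReal.ofReal (Real.exp (-β * U2 ν x) / Z2 ν β)

/-- The generator for `p = 2`, acting on (the periodic lift) `φ` of a `C²` function on `𝕋`: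
`L_{α,β}φ(x) = ½ φ''(x) + α⁻¹ ∫ [φ(x + αβ⟨y-x⟩) - φ(x)] ν(dy)`. -/
def gen2 (ν : Measure 𝕋) (α β : ℝ) (φ : ℝ → ℝ) (z : 𝕋) : ℝ :=
  (1 / 2) * deriv (deriv φ) (rep z)
    + α⁻¹ * ∫ y, (φ (rep z + α * β * rep (y - z)) - φ (rep z)) ∂ν

structure Good (G : ℝ → ℝ) (A a : ℝ) : Prop where
  cont : Continuous G
  per : Function.Periodic G (2 * π)
  nonneg : ∀ x, 0 ≤ G x
  mass : ∫ t in (-π)..π, G t = 2 * π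
  hold : ∀ x y, |G x - G y| ≤ A * |x - y| ^ a
  osc : ∀ x y, |G x - G y| ≤ A * π

def VV (G : ℝ → ℝ) (x : ℝ) : ℝ := (2 * π)⁻¹ * ∫ t in (-π)..π, t ^ 2 * G (x + t)

def DD (G : ℝ → ℝ) (x : ℝ) : ℝ := -(π⁻¹ * ∫ t in (-π)..π, t * G (x + t))

lemma per_shift {F : ℝ → ℝ} (hF : Function.Periodic F (2 * π)) (c : ℝ) :
    ∫ t in (-π)..π, F (c + t) = ∫ t in (-π)..π, F t := by
  rw [intervalIntegral.integral_comp_add_left (fun t => F t) c]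
  have := hF.intervalIntegral_add_eq (c + -π) (-π)
  rw [show c + -π + 2 * π = c + π by ring, show -π + 2 * π = π by ring] at this
  exact this

namespace Good
variable {G : ℝ → ℝ} {A a : ℝ}

lemma mass' (h : Good G A a) (x : ℝ) : ∫ t in (-π)..π, G (x + t) = 2 * π := by
  rw [per_shift h.per, h.mass]

lemma abs_one_sub (h : Good G A a) (y : ℝ) : |1 - G y| ≤ A * π := by
  have h1 : ‖∫ t in (-π)..π, (G t - G y)‖ ≤ A * π * |π - -π| :=
    intervalIntegral.norm_integral_le_of_norm_le_const (fun x _ => h.osc x y)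
  rw [intervalIntegral.integral_sub (h.cont.intervalIntegrable _ _) (by simp), h.mass] at h1
  simp only [intervalIntegral.integral_const, smul_eq_mul, Real.norm_eq_abs] at h1
  have hp := Real.pi_pos
  rw [show 2 * π - (π - -π) * G y = (2 * π) * (1 - G y) by ring, abs_mul,
    abs_of_pos (by positivity : 0 < 2 * π), show π - -π = 2 * π by ring,
    abs_of_pos (by positivity : 0 < 2 * π)] at h1
  nlinarith

lemma le_bd (h : Good G A a) (y : ℝ) : G y ≤ 1 + A * π := by
  have := abs_le.1 (h.abs_one_sub y)
  linarith

lemma abs_bd (h : Good G A a) (y : ℝ) : |G y| ≤ 1 + A * π := by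
  rw [abs_of_nonneg (h.nonneg y)]; exact h.le_bd y

lemma deriv_moving {k : ℝ → ℝ} (hk : Continuous k) (x : ℝ) :
    HasDerivAt (fun x => ∫ s in (x - π)..(x + π), k s) (k (x + π) - k (x - π)) x := by
  have e : (fun x => ∫ s in (x - π)..(x + π), k s) =
      fun x => (∫ s in (0:ℝ)..(x + π), k s) - ∫ s in (0:ℝ)..(x - π), k s := by
    ext x
    rw [intervalIntegral.integral_interval_sub_left] <;> exact hk.intervalIntegrable _ _
  rw [e]
  have h0 : ∀ y, HasDerivAt (fun y => ∫ s in (0:ℝ)..y, k s) (k y) y := fun y =>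
    intervalIntegral.integral_hasDerivAt_right (hk.intervalIntegrable _ _)
      hk.stronglyMeasurable.stronglyMeasurableAtFilter hk.continuousAt
  have h1 := (h0 (x + π)).comp x ((hasDerivAt_id x).add_const π)
  have h2 := (h0 (x - π)).comp x ((hasDerivAt_id x).sub_const π)
  exact (h1.sub h2).congr_deriv (by simp)

lemma P0 (h : Good G A a) (x : ℝ) : ∫ s in (x - π)..(x + π), G s = 2 * π := by
  rw [← h.mass' x, intervalIntegral.integral_comp_add_left (fun t => G t) x]
  rfl

lemma DD_eq (h : Good G A a) (x : ℝ) :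
    DD G x = -(π⁻¹ * ((∫ s in (x - π)..(x + π), s * G s) - x * (2 * π))) := by
  unfold DD
  have := h.cont
  have e := intervalIntegral.integral_comp_add_left (a := -π) (b := π) (fun t => (t - x) * G t) x
  simp only [add_sub_cancel_left] at e
  rw [e]
  congr 2
  rw [← h.P0 x, ← sub_eq_add_neg, ← intervalIntegral.integral_const_mul x,
    ← intervalIntegral.integral_sub]
  · congr 1
    ext s
    ring
  all_goals exact Continuous.intervalIntegrable (by fun_prop) _ _

lemma VV_eq (h : Good G A a) (x : ℝ) :
    VV G x = (2 * π)⁻¹ * ((∫ s in (x - π)..(x + π), s ^ 2 * G s)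
      - 2 * x * (∫ s in (x - π)..(x + π), s * G s) + x ^ 2 * (2 * π)) := by
  unfold VV
  have := h.cont
  have e := intervalIntegral.integral_comp_add_left (a := -π) (b := π)
    (fun t => (t - x) ^ 2 * G t) x
  simp only [add_sub_cancel_left] at e
  rw [e]
  congr 1
  rw [← h.P0 x, ← sub_eq_add_neg, ← intervalIntegral.integral_const_mul (2 * x),
    ← intervalIntegral.integral_const_mul (x ^ 2),
    ← intervalIntegral.integral_sub, ← intervalIntegral.integral_add]
  · congr 1
    ext s
    ring
  all_goals exact Continuous.intervalIntegrable (by fun_prop) _ _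

lemma per' (h : Good G A a) (x : ℝ) : G (x - π) = G (x + π) := by
  rw [← h.per (x - π)]; congr 1; ring

lemma hasDerivAt_DD (h : Good G A a) (x : ℝ) :
    HasDerivAt (DD G) (2 - 2 * G (x + π)) x := by
  have := h.cont
  rw [show DD G = _ from funext h.DD_eq]
  have h1 := deriv_moving (k := fun s => s * G s) (by fun_prop) x
  have h2 := ((h1.sub ((hasDerivAt_id x).mul_const (2 * π))).const_mul (π⁻¹)).neg
  refine h2.congr_deriv ?_
  rw [h.per']
  have := Real.pi_ne_zero
  field_simp
  ring

lemma hasDerivAt_VV (h : Good G A a) (x : ℝ) :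
    HasDerivAt (VV G) (DD G x) x := by
  have := h.cont
  rw [show VV G = _ from funext h.VV_eq]
  have h1 := deriv_moving (k := fun s => s * G s) (by fun_prop) x
  have h2 := deriv_moving (k := fun s => s ^ 2 * G s) (by fun_prop) x
  have h3 := ((h2.sub (((hasDerivAt_id x).const_mul 2).mul h1)).add
    ((hasDerivAt_pow 2 x).mul_const (2 * π))).const_mul ((2 * π)⁻¹)
  refine h3.congr_deriv ?_
  rw [h.per', h.DD_eq]
  have := Real.pi_ne_zero
  simp only [id]
  field_simp
  ring

lemma cont_VV (h : Good G A a) : Continuous (VV G) :=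
  continuous_iff_continuousAt.2 fun x => (h.hasDerivAt_VV x).continuousAt

lemma cont_DD (h : Good G A a) : Continuous (DD G) :=
  continuous_iff_continuousAt.2 fun x => (h.hasDerivAt_DD x).continuousAt

lemma per_VV (h : Good G A a) : Function.Periodic (VV G) (2 * π) := by
  intro x
  unfold VV
  congr 2
  ext t
  rw [← h.per (x + t)]; congr 2; ring

lemma per_DD (h : Good G A a) : Function.Periodic (DD G) (2 * π) := by
  intro x
  unfold DD
  congr 3
  ext t
  rw [← h.per (x + t)]; congr 2; ring

lemma abs_DD (h : Good G A a) (x : ℝ) : |DD G x| ≤ 2 * π := by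
  have hc := h.cont
  have hp := Real.pi_pos
  unfold DD
  rw [abs_neg, abs_mul, abs_of_pos (inv_pos.2 hp)]
  have : ‖∫ t in (-π)..π, t * G (x + t)‖ ≤ ∫ t in (-π)..π, π * G (x + t) := by
    apply intervalIntegral.norm_integral_le_of_norm_le (by linarith)
    · refine Filter.Eventually.of_forall fun t ht => ?_
      rw [norm_mul, Real.norm_eq_abs, Real.norm_eq_abs, abs_of_nonneg (h.nonneg _)]
      exact mul_le_mul_of_nonneg_right (abs_le.2 ⟨ht.1.le, ht.2⟩) (h.nonneg _)
    · exact Continuous.intervalIntegrable (by fun_prop) _ _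
  rw [intervalIntegral.integral_const_mul, h.mass', Real.norm_eq_abs] at this
  rw [inv_mul_le_iff₀ hp]
  exact this

lemma DD_lip (h : Good G A a) (x y : ℝ) : |DD G y - DD G x| ≤ 2 * (A * π) * |y - x| := by
  have := (convex_univ (𝕜 := ℝ) (E := ℝ)).norm_image_sub_le_of_norm_hasDerivWithin_le
    (f := DD G) (C := 2 * (A * π)) (x := x) (y := y)
    (fun z _ => (h.hasDerivAt_DD z).hasDerivWithinAt) (fun z _ => by
      rw [show 2 - 2 * G (z + π) = 2 * (1 - G (z + π)) by ring, norm_mul]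
      have := h.abs_one_sub (z + π)
      simp only [Real.norm_eq_abs] at *
      rw [abs_of_pos (by norm_num : (0:ℝ) < 2)]
      linarith) (mem_univ _) (mem_univ _)
  exact this

lemma VV_lip (h : Good G A a) (x y : ℝ) : |VV G y - VV G x| ≤ 2 * π * |y - x| :=
  (convex_univ (𝕜 := ℝ) (E := ℝ)).norm_image_sub_le_of_norm_hasDerivWithin_le
    (f := VV G) (C := 2 * π) (x := x) (y := y)
    (fun z _ => (h.hasDerivAt_VV z).hasDerivWithinAt) (fun z _ => h.abs_DD z)
    (mem_univ _) (mem_univ _)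

lemma VV_taylor (h : Good G A a) (x y : ℝ) :
    |VV G y - VV G x - (y - x) * DD G x| ≤ 2 * (A * π) * |y - x| ^ 2 := by
  have hd : ∀ z, HasDerivAt (fun z => VV G z - z * DD G x) (DD G z - DD G x) z := fun z => by
    exact ((h.hasDerivAt_VV z).sub ((hasDerivAt_id z).mul_const (DD G x))).congr_deriv (by simp)
  have hA : 0 ≤ 2 * (A * π) := by
    have := (abs_nonneg _).trans (h.abs_one_sub 0); linarith
  have := (convex_uIcc x y).norm_image_sub_le_of_norm_hasDerivWithin_le
    (f := fun z => VV G z - z * DD G x) (C := 2 * (A * π) * |y - x|) (x := x) (y := y)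
    (fun z _ => (hd z).hasDerivWithinAt) (fun z hz => by
      refine (h.DD_lip x z).trans ?_
      exact mul_le_mul_of_nonneg_left (Set.abs_sub_left_of_mem_uIcc hz) hA)
    left_mem_uIcc right_mem_uIcc
  simp only [Real.norm_eq_abs] at this
  calc _ = |VV G y - y * DD G x - (VV G x - x * DD G x)| := by congr 1; ring
    _ ≤ _ := this
    _ = _ := by ring

end Good

lemma exp_rem (u : ℝ) : |Real.exp u - 1 - u| ≤ u ^ 2 * Real.exp |u| := by
  have := Complex.norm_exp_sub_sum_le_norm_mul_exp (u : ℂ) 2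
  simp only [Finset.sum_range_succ, Finset.sum_range_zero] at this
  norm_num at this
  have e : Complex.exp u - (1 + u) = ((Real.exp u - 1 - u : ℝ) : ℂ) := by
    push_cast; ring
  rw [e, Complex.norm_real] at this
  simpa using this
lemma tail_bd {F : ℝ → ℝ} (hF : Continuous F) {ε K : ℝ} (he : 0 < ε)
    (h1 : ∀ s, (1 - ε) * π ≤ s → s ≤ π → |F s| ≤ K)
    (h2 : ∀ s, (1 - ε) * π ≤ s → s ≤ π → |F (-s)| ≤ K) :
    |(∫ s in (-π)..π, F s) - ∫ s in (-((1 - ε) * π))..((1 - ε) * π), F s| ≤ 2 * π * (ε * K) := by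
  have hp := Real.pi_pos
  have hi : ∀ a b, IntervalIntegrable F volume a b := fun a b => hF.intervalIntegrable a b
  have e : (∫ s in (-π)..π, F s) - ∫ s in (-((1 - ε) * π))..((1 - ε) * π), F s =
      (∫ s in (-π)..(-((1 - ε) * π)), F s) + ∫ s in ((1 - ε) * π)..π, F s := by
    rw [← intervalIntegral.integral_add_adjacent_intervals (hi (-π) (-((1 - ε) * π))) (hi _ π),
      ← intervalIntegral.integral_add_adjacent_intervals (hi (-((1 - ε) * π)) ((1 - ε) * π))
        (hi _ π)]
    ring
  have hle : (1 - ε) * π ≤ π := by nlinarith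
  have b1 : ‖∫ s in (-π)..(-((1 - ε) * π)), F s‖ ≤ K * |-((1 - ε) * π) - -π| := by
    apply intervalIntegral.norm_integral_le_of_norm_le_const
    intro s hs
    rw [uIoc_of_le (by linarith)] at hs
    have := h2 (-s) (by linarith [hs.2]) (by linarith [hs.1])
    rwa [neg_neg] at this
  have b2 : ‖∫ s in ((1 - ε) * π)..π, F s‖ ≤ K * |π - (1 - ε) * π| := by
    apply intervalIntegral.norm_integral_le_of_norm_le_const
    intro s hs
    rw [uIoc_of_le (by linarith)] at hs
    exact h1 s hs.1.le hs.2
  rw [show -((1 - ε) * π) - -π = ε * π by ring, abs_of_pos (by positivity)] at b1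
  rw [show π - (1 - ε) * π = ε * π by ring, abs_of_pos (by positivity)] at b2
  rw [e]
  refine (abs_add_le _ _).trans ?_
  simp only [Real.norm_eq_abs] at b1 b2
  linarith

namespace Good
variable {G : ℝ → ℝ} {A a : ℝ}

def I0 (G : ℝ → ℝ) (ε x : ℝ) : ℝ := (2 * π)⁻¹ * ∫ t in (-π)..π, G (x + (1 - ε) * t)
def I1 (G : ℝ → ℝ) (ε x : ℝ) : ℝ := (2 * π)⁻¹ * ∫ t in (-π)..π, t * G (x + (1 - ε) * t)

lemma I0_bd (h : Good G A a) (hA : 0 < A) (ha : 0 < a) (ha1 : a ≤ 1) {ε : ℝ}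
    (he : 0 < ε) (he' : ε ≤ 1 / 2) (x : ℝ) :
    |I0 G ε x - 1 - ε * (1 - G (x + π))| ≤ 4 * (A * π) * ε ^ 2 + A * π * (ε * ε ^ a) := by
  have hp := Real.pi_pos
  have hc := h.cont
  have hea : ε ^ a ≤ 1 := Real.rpow_le_one he.le (by linarith) ha.le
  have hea0 : 0 ≤ ε ^ a := Real.rpow_nonneg he.le _
  have key : ∀ s : ℝ, |s| ≤ ε * π → A * |s| ^ a ≤ A * π * ε ^ a := by
    intro s hs
    have h1 : |s| ^ a ≤ (ε * π) ^ a := Real.rpow_le_rpow (abs_nonneg _) hs ha.le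
    rw [Real.mul_rpow he.le hp.le] at h1
    have h2 : π ^ a ≤ π ^ (1:ℝ) :=
      Real.rpow_le_rpow_of_exponent_le (by linarith [Real.pi_gt_three]) ha1
    rw [Real.rpow_one] at h2
    have : |s| ^ a ≤ ε ^ a * π := h1.trans (mul_le_mul_of_nonneg_left h2 hea0)
    calc _ ≤ A * (ε ^ a * π) := mul_le_mul_of_nonneg_left this hA.le
      _ = _ := by ring
  have ht := tail_bd (F := fun s => G (x + s) - G (x + π)) (by fun_prop) he
    (K := A * π * ε ^ a)
    (fun s h1 h2 => by
      refine (h.hold _ _).trans ?_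
      rw [show x + s - (x + π) = s - π by ring]
      exact key _ (abs_le.2 ⟨by linarith, by nlinarith⟩))
    (fun s h1 h2 => by
      rw [← h.per']
      refine (h.hold _ _).trans ?_
      rw [show x + -s - (x - π) = π - s by ring]
      exact key _ (abs_le.2 ⟨by nlinarith, by linarith⟩))
  rw [intervalIntegral.integral_sub (Continuous.intervalIntegrable (by fun_prop) _ _) (by simp),
    intervalIntegral.integral_sub (Continuous.intervalIntegrable (by fun_prop) _ _) (by simp),
    h.mass'] at ht
  have hs := intervalIntegral.mul_integral_comp_mul_left (a := -π) (b := π)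
    (f := fun s => G (x + s)) (1 - ε)
  rw [show (1 - ε) * -π = -((1 - ε) * π) by ring] at hs
  rw [← hs] at ht
  simp only [intervalIntegral.integral_const, smul_eq_mul] at ht
  have hI : (∫ t in (-π)..π, G (x + (1 - ε) * t)) = 2 * π * I0 G ε x := by
    unfold I0; field_simp
  rw [hI] at ht
  rw [show 2 * π - (π - -π) * G (x + π) - ((1 - ε) * (2 * π * I0 G ε x) -
    ((1 - ε) * π - -((1 - ε) * π)) * G (x + π)) =
    2 * π * (1 - (1 - ε) * I0 G ε x - ε * G (x + π)) by ring, abs_mul,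
    abs_of_pos (by positivity : 0 < 2 * π)] at ht
  have ht := le_of_mul_le_mul_left ht (by positivity)
  set I := I0 G ε x
  have hB := h.abs_one_sub (x + π)
  set g := G (x + π)
  have hBp : 0 < A * π := by positivity
  have hX : A * π * ε ^ a ≤ A * π := by nlinarith
  -- (1-ε)(I-1) = ε(1-g) - E
  have hI1 : |I - 1| ≤ 4 * (A * π) * ε := by
    have h1 : |(1 - ε) * (I - 1)| ≤ 2 * (A * π) * ε := by
      rw [show (1 - ε) * (I - 1) = ε * (1 - g) + -(1 - (1 - ε) * I - ε * g) by ring]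
      refine (abs_add_le _ _).trans ?_
      rw [abs_neg, abs_mul, abs_of_pos he]
      have := mul_le_mul_of_nonneg_left hB he.le
      have := mul_le_mul_of_nonneg_left hX he.le
      linarith
    rw [abs_mul, abs_of_pos (by linarith)] at h1
    nlinarith [abs_nonneg (I - 1)]
  rw [show I - 1 - ε * (1 - g) = ε * (I - 1) + -(1 - (1 - ε) * I - ε * g) by ring]
  refine (abs_add_le _ _).trans ?_
  rw [abs_neg, abs_mul, abs_of_pos he]
  nlinarith

lemma I1_bd (h : Good G A a) (hA : 0 < A) {ε : ℝ}
    (he : 0 < ε) (he' : ε ≤ 1 / 2) (x : ℝ) :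
    |I1 G ε x + DD G x / 2| ≤ 3 * π * (1 + A * π) * ε := by
  have hp := Real.pi_pos
  have hc := h.cont
  have hK : ∀ s y : ℝ, |s| ≤ π → |s * G y| ≤ π * (1 + A * π) := fun s y hs => by
    rw [abs_mul]
    exact mul_le_mul hs (h.abs_bd _) (abs_nonneg _) hp.le
  have ht := tail_bd (F := fun s => s * G (x + s)) (by fun_prop) he
    (K := π * (1 + A * π))
    (fun s h1 h2 => hK _ _ (abs_le.2 ⟨by nlinarith, by nlinarith⟩))
    (fun s h1 h2 => hK _ _ (abs_le.2 ⟨by nlinarith, by nlinarith⟩))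
  have hs := intervalIntegral.mul_integral_comp_mul_left (a := -π) (b := π)
    (f := fun s => s * G (x + s)) (1 - ε)
  rw [show (1 - ε) * -π = -((1 - ε) * π) by ring] at hs
  rw [← hs] at ht
  simp only [mul_assoc (1 - ε)] at ht
  rw [intervalIntegral.integral_const_mul] at ht
  have hI : (∫ t in (-π)..π, t * G (x + (1 - ε) * t)) = 2 * π * I1 G ε x := by
    unfold I1; rw [← mul_assoc, mul_inv_cancel₀ (by positivity), one_mul]
  have hD : (∫ t in (-π)..π, t * G (x + t)) = 2 * π * (- DD G x / 2) := by
    unfold DD; field_simp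
  rw [hI, hD] at ht
  rw [show 2 * π * (-DD G x / 2) - (1 - ε) * ((1 - ε) * (2 * π * I1 G ε x)) =
    2 * π * (-DD G x / 2 - (1 - ε) ^ 2 * I1 G ε x) by ring, abs_mul,
    abs_of_pos (by positivity : 0 < 2 * π)] at ht
  have ht := le_of_mul_le_mul_left ht (by positivity)
  have hb : |I1 G ε x| ≤ π * (1 + A * π) := by
    have : ‖∫ t in (-π)..π, t * G (x + (1 - ε) * t)‖ ≤ π * (1 + A * π) * |π - -π| := by
      apply intervalIntegral.norm_integral_le_of_norm_le_const
      intro s hs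
      rw [uIoc_of_le (by linarith)] at hs
      exact hK _ _ (abs_le.2 ⟨hs.1.le, hs.2⟩)
    rw [hI, norm_mul, Real.norm_eq_abs, Real.norm_eq_abs, show π - -π = 2 * π by ring,
      abs_of_pos (by positivity : 0 < 2 * π), mul_comm] at this
    exact le_of_mul_le_mul_right this (by positivity)
  rw [show I1 G ε x + DD G x / 2 = (2 * ε - ε ^ 2) * I1 G ε x
    + -(-DD G x / 2 - (1 - ε) ^ 2 * I1 G ε x) by ring]
  refine (abs_add_le _ _).trans ?_
  rw [abs_neg, abs_mul, abs_of_nonneg (by nlinarith : 0 ≤ 2 * ε - ε ^ 2)]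
  have : (2 * ε - ε ^ 2) * |I1 G ε x| ≤ 2 * ε * (π * (1 + A * π)) :=
    mul_le_mul (by nlinarith) hb (abs_nonneg _) (by linarith)
  linarith

def RC (A : ℝ) : ℝ := 2 * (A * π) * π ^ 2 + (2 * π ^ 2) ^ 2 * Real.exp (π ^ 2)

lemma R_bd (h : Good G A a) (hA : 0 < A) {ε β : ℝ} (hb : 1 ≤ β)
    (he : 0 < ε) (he' : β * ε ≤ 1 / 2) (x t : ℝ) (ht : |t| ≤ π) :
    |Real.exp (β * (VV G x - VV G (x - ε * t))) - 1 - β * ε * DD G x * t| ≤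
      RC A * (β * ε) ^ 2 := by
  have hp := Real.pi_pos
  have hs : |x - ε * t - x| ≤ ε * π := by
    rw [show x - ε * t - x = -(ε * t) by ring, abs_neg, abs_mul, abs_of_pos he]
    exact mul_le_mul_of_nonneg_left ht he.le
  set u := β * (VV G x - VV G (x - ε * t)) with hu
  have hu1 : |u| ≤ 2 * π ^ 2 * (β * ε) := by
    have := h.VV_lip x (x - ε * t)
    rw [hu, abs_mul, abs_of_pos (by linarith), abs_sub_comm]
    calc _ ≤ β * (2 * π * (ε * π)) := by
            apply mul_le_mul_of_nonneg_left _ (by linarith)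
            exact this.trans (mul_le_mul_of_nonneg_left hs (by positivity))
      _ = _ := by ring
  have hu2 : |u| ≤ π ^ 2 := by nlinarith [sq_nonneg π]
  have hu3 : |u - β * ε * DD G x * t| ≤ 2 * (A * π) * π ^ 2 * (β * ε) ^ 2 := by
    have := h.VV_taylor x (x - ε * t)
    have e : u - β * ε * DD G x * t =
      -(β * (VV G (x - ε * t) - VV G x - (x - ε * t - x) * DD G x)) := by rw [hu]; ring
    rw [e, abs_neg, abs_mul, abs_of_pos (by linarith)]
    calc _ ≤ β * (2 * (A * π) * (ε * π) ^ 2) := by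
            apply mul_le_mul_of_nonneg_left _ (by linarith)
            refine this.trans (mul_le_mul_of_nonneg_left ?_ (by positivity))
            exact pow_le_pow_left₀ (abs_nonneg _) hs 2
      _ = 2 * (A * π) * (ε * π) ^ 2 * β := by ring
      _ ≤ 2 * (A * π) * (ε * π) ^ 2 * β ^ 2 := by
            apply mul_le_mul_of_nonneg_left _ (by positivity)
            nlinarith
      _ = _ := by ring
  have hr := exp_rem u
  have hr2 : u ^ 2 * Real.exp |u| ≤ (2 * π ^ 2 * (β * ε)) ^ 2 * Real.exp (π ^ 2) := by
    rw [← sq_abs u]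
    apply mul_le_mul (pow_le_pow_left₀ (abs_nonneg _) hu1 2) (Real.exp_le_exp.2 hu2)
      (Real.exp_pos _).le (by positivity)
  rw [show Real.exp u - 1 - β * ε * DD G x * t =
    (Real.exp u - 1 - u) + (u - β * ε * DD G x * t) by ring]
  refine (abs_add_le _ _).trans ?_
  unfold RC
  calc _ ≤ (2 * π ^ 2 * (β * ε)) ^ 2 * Real.exp (π ^ 2) + 2 * (A * π) * π ^ 2 * (β * ε) ^ 2 := by
          linarith
    _ = _ := by ring

def HH (G : ℝ → ℝ) (α β x : ℝ) : ℝ :=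
  (1 / 2) * (β ^ 2 * DD G x ^ 2 - β * (2 - 2 * G (x + π))) +
    α⁻¹ * ((2 * π)⁻¹ * (∫ t in (-π)..π,
      Real.exp (β * (VV G x - VV G (x - α * β * t))) * G (x - α * β * t + t)) - 1)

def CC (A : ℝ) : ℝ := 6 * π ^ 2 * (1 + A * π) + 4 * (A * π) + A * π + RC A * (1 + A * π)

lemma HH_bd (h : Good G A a) (hA : 0 < A) (ha : 0 < a) (ha1 : a ≤ 1) {α β : ℝ}
    (hb : 1 ≤ β) (hα : 0 < α) (hαβ : α < 1 / (2 * β ^ 2)) (x : ℝ) :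
    |HH G α β x| ≤ CC A * max (α * β ^ 4) (α ^ a * β ^ (1 + a)) := by
  have hp := Real.pi_pos
  have hc := h.cont
  have hcV := h.cont_VV
  have hβ : 0 < β := by linarith
  set ε := α * β with hε
  have he : 0 < ε := by positivity
  have hbe : β * ε ≤ 1 / 2 := by
    rw [lt_div_iff₀ (by positivity)] at hαβ
    rw [hε]; nlinarith
  have he' : ε ≤ 1 / 2 := by nlinarith
  set R : ℝ → ℝ := fun t =>
    Real.exp (β * (VV G x - VV G (x - ε * t))) - 1 - β * ε * DD G x * t with hR
  have hRc : Continuous R := by fun_prop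
  set Q := (2 * π)⁻¹ * ∫ t in (-π)..π, R t * G (x + (1 - ε) * t) with hQ
  have hint : (2 * π)⁻¹ * (∫ t in (-π)..π,
      Real.exp (β * (VV G x - VV G (x - ε * t))) * G (x - ε * t + t)) =
      I0 G ε x + β * ε * DD G x * I1 G ε x + Q := by
    have : (∫ t in (-π)..π,
      Real.exp (β * (VV G x - VV G (x - ε * t))) * G (x - ε * t + t)) =
      ∫ t in (-π)..π, (G (x + (1 - ε) * t) + β * ε * DD G x * (t * G (x + (1 - ε) * t))
        + R t * G (x + (1 - ε) * t)) := by
      congr 1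
      ext t
      rw [show x - ε * t + t = x + (1 - ε) * t by ring]
      simp only [hR]
      ring
    rw [this, intervalIntegral.integral_add, intervalIntegral.integral_add,
      intervalIntegral.integral_const_mul, hQ, I0, I1]
    · ring
    all_goals exact Continuous.intervalIntegrable (by fun_prop) _ _
  have hRC : 0 ≤ RC A := by unfold RC; positivity
  have hQb : |Q| ≤ RC A * (β * ε) ^ 2 * (1 + A * π) := by
    have : ‖∫ t in (-π)..π, R t * G (x + (1 - ε) * t)‖ ≤
        RC A * (β * ε) ^ 2 * (1 + A * π) * |π - -π| := by
      apply intervalIntegral.norm_integral_le_of_norm_le_const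
      intro s hs
      rw [uIoc_of_le (by linarith)] at hs
      rw [norm_mul]
      exact mul_le_mul (h.R_bd hA hb he hbe x s (abs_le.2 ⟨hs.1.le, hs.2⟩)) (h.abs_bd _)
        (abs_nonneg _) (by positivity)
    rw [show π - -π = 2 * π by ring, abs_of_pos (by positivity : 0 < 2 * π),
      Real.norm_eq_abs] at this
    rw [hQ, abs_mul, abs_of_pos (by positivity : 0 < (2 * π)⁻¹), inv_mul_le_iff₀ (by positivity)]
    linarith
  have e : HH G α β x = β ^ 2 * DD G x * (I1 G ε x + DD G x / 2)
      + α⁻¹ * (I0 G ε x - 1 - ε * (1 - G (x + π))) + α⁻¹ * Q := by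
    unfold HH
    rw [← hε, hint, hε]
    field_simp
    ring
  set M := max (α * β ^ 4) (α ^ a * β ^ (1 + a)) with hM
  have hM1 : α * β ^ 4 ≤ M := le_max_left _ _
  have hM2 : α ^ a * β ^ (1 + a) ≤ M := le_max_right _ _
  have hb3 : α * β ^ 3 ≤ α * β ^ 4 :=
    mul_le_mul_of_nonneg_left (pow_le_pow_right₀ hb (by norm_num)) hα.le
  have hb2 : α * β ^ 2 ≤ α * β ^ 4 :=
    mul_le_mul_of_nonneg_left (pow_le_pow_right₀ hb (by norm_num)) hα.le
  have t1 : |β ^ 2 * DD G x * (I1 G ε x + DD G x / 2)| ≤ 6 * π ^ 2 * (1 + A * π) * M := by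
    rw [abs_mul, abs_mul, abs_of_pos (by positivity : 0 < β ^ 2)]
    calc _ ≤ β ^ 2 * (2 * π) * (3 * π * (1 + A * π) * ε) :=
          mul_le_mul (mul_le_mul_of_nonneg_left (h.abs_DD x) (by positivity))
            (h.I1_bd hA he he' x) (abs_nonneg _) (by positivity)
      _ = 6 * π ^ 2 * (1 + A * π) * (α * β ^ 3) := by rw [hε]; ring
      _ ≤ _ := mul_le_mul_of_nonneg_left (by linarith) (by positivity)
  have t2 : |α⁻¹ * (I0 G ε x - 1 - ε * (1 - G (x + π)))| ≤ 4 * (A * π) * M + A * π * M := by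
    rw [abs_mul, abs_of_pos (by positivity : 0 < α⁻¹)]
    calc _ ≤ α⁻¹ * (4 * (A * π) * ε ^ 2 + A * π * (ε * ε ^ a)) :=
          mul_le_mul_of_nonneg_left (h.I0_bd hA ha ha1 he he' x) (by positivity)
      _ = 4 * (A * π) * (α * β ^ 2) + A * π * (α ^ a * β ^ (1 + a)) := by
          rw [hε, Real.mul_rpow hα.le hβ.le, Real.rpow_add hβ, Real.rpow_one]
          field_simp
      _ ≤ _ := add_le_add (mul_le_mul_of_nonneg_left (by linarith) (by positivity))
          (mul_le_mul_of_nonneg_left (by linarith) (by positivity))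
  have t3 : |α⁻¹ * Q| ≤ RC A * (1 + A * π) * M := by
    rw [abs_mul, abs_of_pos (by positivity : 0 < α⁻¹)]
    calc _ ≤ α⁻¹ * (RC A * (β * ε) ^ 2 * (1 + A * π)) :=
          mul_le_mul_of_nonneg_left hQb (by positivity)
      _ = RC A * (1 + A * π) * (α * β ^ 4) := by rw [hε]; field_simp
      _ ≤ _ := mul_le_mul_of_nonneg_left hM1 (by positivity)
  rw [e]
  refine (abs_add_le _ _).trans ((add_le_add (abs_add_le _ _) le_rfl).trans ?_)
  unfold CC
  linarith

end Good
namespace Good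
variable {G : ℝ → ℝ} {A a : ℝ}

lemma ibp {u v u' v' : ℝ → ℝ} (hu : ∀ x, HasDerivAt u (u' x) x) (hv : ∀ x, HasDerivAt v (v' x) x)
    (hu' : Continuous u') (hv' : Continuous v')
    (pu : Function.Periodic u (2 * π)) (pv : Function.Periodic v (2 * π)) :
    ∫ x in (-π)..π, u x * v' x = -∫ x in (-π)..π, u' x * v x := by
  rw [intervalIntegral.integral_mul_deriv_eq_deriv_mul (fun x _ => hu x) (fun x _ => hv x)
    (hu'.intervalIntegrable _ _) (hv'.intervalIntegrable _ _)]
  have h1 := pu (-π)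
  have h2 := pv (-π)
  rw [show -π + 2 * π = π by ring] at h1 h2
  rw [h1, h2]
  ring

lemma per_deriv {φ : ℝ → ℝ} {T : ℝ} (h : Function.Periodic φ T) :
    Function.Periodic (deriv φ) T := by
  intro x
  rw [← deriv_comp_add_const]
  congr 1
  ext y
  exact h y

lemma T1 (h : Good G A a) (β : ℝ) {φ : ℝ → ℝ} (hφ : Function.Periodic φ (2 * π))
    (hφ2 : ContDiff ℝ 2 φ) :
    ∫ x in (-π)..π, Real.exp (-β * VV G x) * deriv (deriv φ) x =
    ∫ x in (-π)..π, Real.exp (-β * VV G x) * (φ x *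
      (β ^ 2 * DD G x ^ 2 - β * (2 - 2 * G (x + π)))) := by
  have hc := h.cont
  have hcV := h.cont_VV
  have hcD := h.cont_DD
  have hw : ∀ x, HasDerivAt (fun x => Real.exp (-β * VV G x))
      (Real.exp (-β * VV G x) * (-β * DD G x)) x :=
    fun x => ((h.hasDerivAt_VV x).const_mul (-β)).exp
  have hw' : ∀ x, HasDerivAt (fun x => Real.exp (-β * VV G x) * (-β * DD G x))
      (Real.exp (-β * VV G x) * (-β * DD G x) * (-β * DD G x) +
        Real.exp (-β * VV G x) * (-β * (2 - 2 * G (x + π)))) x :=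
    fun x => (hw x).mul ((h.hasDerivAt_DD x).const_mul (-β))
  have hd1 : ContDiff ℝ 1 (deriv φ) := by
    have := (contDiff_succ_iff_deriv (n := 1) (f := φ) (𝕜 := ℝ)).1 (by rw [one_add_one_eq_two]; exact hφ2)
    exact this.2.2
  have hφd : ∀ x, HasDerivAt φ (deriv φ x) x := fun x =>
    (hφ2.differentiable (by norm_num) x).hasDerivAt
  have hφd2 : ∀ x, HasDerivAt (deriv φ) (deriv (deriv φ) x) x := fun x =>
    (hd1.differentiable (by norm_num) x).hasDerivAt
  have hcd : Continuous (deriv φ) := hd1.continuous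
  have hcd2 : Continuous (deriv (deriv φ)) := hd1.continuous_deriv (by norm_num)
  have pw : Function.Periodic (fun x => Real.exp (-β * VV G x)) (2 * π) := fun x => by
    simp only [h.per_VV x]
  have pw' : Function.Periodic (fun x => Real.exp (-β * VV G x) * (-β * DD G x)) (2 * π) :=
    fun x => by simp only [h.per_VV x, h.per_DD x]
  rw [ibp hw hφd2 (by fun_prop) hcd2 pw (per_deriv hφ),
    ibp hw' hφd (by fun_prop) hcd pw' hφ, neg_neg]
  congr 1
  ext x
  ring

lemma T2 {w G φ : ℝ → ℝ} (hw : Continuous w) (hG : Continuous G) (hφ : Continuous φ)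
    (pw : Function.Periodic w (2 * π)) (pG : Function.Periodic G (2 * π))
    (pφ : Function.Periodic φ (2 * π)) (ε : ℝ) :
    ∫ x in (-π)..π, ∫ t in (-π)..π, w x * (G (x + t) * φ (x + ε * t)) =
    ∫ x in (-π)..π, ∫ t in (-π)..π, φ x * (w (x - ε * t) * G (x - ε * t + t)) := by
  have hint : ∀ F : ℝ × ℝ → ℝ, Continuous F →
      IntegrableOn F (uIoc (-π) π ×ˢ uIoc (-π) π) := fun F hF =>
    (hF.continuousOn.integrableOn_compact (isCompact_uIcc.prod isCompact_uIcc)).mono_set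
      (Set.prod_mono uIoc_subset_uIcc uIoc_subset_uIcc)
  refine (intervalIntegral_intervalIntegral_swap ?_).trans
    (Eq.trans ?_ (intervalIntegral_intervalIntegral_swap ?_).symm)
  rotate_left
  · congr 1
    ext t
    have p : Function.Periodic (fun x => w x * (G (x + t) * φ (x + ε * t))) (2 * π) := fun x => by
      simp only [pw x]
      rw [show x + 2 * π + t = x + t + 2 * π by ring, pG,
        show x + 2 * π + ε * t = x + ε * t + 2 * π by ring, pφ]
    rw [← per_shift p (-(ε * t))]
    congr 1
    ext x
    rw [show -(ε * t) + x = x - ε * t by ring, show x - ε * t + ε * t = x by ring]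
    ring
  · exact hint _ (by unfold Function.uncurry; fun_prop)
  · exact hint _ (by unfold Function.uncurry; fun_prop)

lemma cont_param {F : ℝ × ℝ → ℝ} (hF : Continuous F) :
    Continuous fun x => ∫ t in (-π)..π, F (x, t) :=
  intervalIntegral.continuous_parametric_intervalIntegral_of_continuous' (f := fun x t => F (x, t))
    hF _ _

lemma cont_HH (h : Good G A a) (α β : ℝ) : Continuous (HH G α β) := by
  have hc := h.cont
  have hcV := h.cont_VV
  have hcD := h.cont_DD
  have := cont_param (F := fun p => Real.exp (β * (VV G p.1 - VV G (p.1 - α * β * p.2))) *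
    G (p.1 - α * β * p.2 + p.2)) (by fun_prop)
  unfold HH
  fun_prop

lemma adj (h : Good G A a) (α β : ℝ) {φ : ℝ → ℝ} (hφ : Function.Periodic φ (2 * π))
    (hφ2 : ContDiff ℝ 2 φ) :
    ∫ x in (-π)..π, Real.exp (-β * VV G x) * ((1 / 2) * deriv (deriv φ) x + α⁻¹ *
      ((2 * π)⁻¹ * ∫ t in (-π)..π, G (x + t) * (φ (x + α * β * t) - φ x))) =
    ∫ x in (-π)..π, Real.exp (-β * VV G x) * (φ x * HH G α β x) := by
  have hp := Real.pi_pos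
  have hc := h.cont
  have hcV := h.cont_VV
  have hcD := h.cont_DD
  have hcφ := hφ2.continuous
  have hd1 : ContDiff ℝ 1 (deriv φ) := by
    have := (contDiff_succ_iff_deriv (n := 1) (f := φ) (𝕜 := ℝ)).1 (by rw [one_add_one_eq_two]; exact hφ2)
    exact this.2.2
  have hcd2 : Continuous (deriv (deriv φ)) := hd1.continuous_deriv (by norm_num)
  have pw : Function.Periodic (fun x => Real.exp (-β * VV G x)) (2 * π) := fun x => by
    simp only [h.per_VV x]
  have k1 := cont_param (F := fun p => Real.exp (-β * VV G p.1) *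
    (G (p.1 + p.2) * φ (p.1 + α * β * p.2))) (by fun_prop)
  have k2 := cont_param (F := fun p => φ p.1 * (Real.exp (-β * VV G (p.1 - α * β * p.2)) *
    G (p.1 - α * β * p.2 + p.2))) (by fun_prop)
  have t1 := h.T1 β hφ hφ2
  have t2 := T2 (w := fun x => Real.exp (-β * VV G x)) (by fun_prop) hc hcφ pw h.per hφ (α * β)
  have e1 : ∀ x, Real.exp (-β * VV G x) * ((1 / 2) * deriv (deriv φ) x + α⁻¹ *
      ((2 * π)⁻¹ * ∫ t in (-π)..π, G (x + t) * (φ (x + α * β * t) - φ x))) =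
      (1 / 2) * (Real.exp (-β * VV G x) * deriv (deriv φ) x) +
      (α⁻¹ * (2 * π)⁻¹) * (∫ t in (-π)..π, Real.exp (-β * VV G x) *
        (G (x + t) * φ (x + α * β * t))) - α⁻¹ * (Real.exp (-β * VV G x) * φ x) := by
    intro x
    have : ∫ t in (-π)..π, G (x + t) * (φ (x + α * β * t) - φ x) =
        (∫ t in (-π)..π, G (x + t) * φ (x + α * β * t)) - 2 * π * φ x := by
      rw [← h.mass' x, ← intervalIntegral.integral_mul_const, ← intervalIntegral.integral_sub]
      · congr 1; ext t; ring
      all_goals exact Continuous.intervalIntegrable (by fun_prop) _ _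
    rw [this, intervalIntegral.integral_const_mul]
    generalize (∫ t in (-π)..π, G (x + t) * φ (x + α * β * t)) = J
    have : (2 * π)⁻¹ * (J - 2 * π * φ x) = (2 * π)⁻¹ * J - φ x := by field_simp
    rw [this]
    ring
  have e2 : ∀ x, Real.exp (-β * VV G x) * (φ x * HH G α β x) =
      (1 / 2) * (Real.exp (-β * VV G x) * (φ x *
      (β ^ 2 * DD G x ^ 2 - β * (2 - 2 * G (x + π))))) +
      (α⁻¹ * (2 * π)⁻¹) * (∫ t in (-π)..π, φ x * (Real.exp (-β * VV G (x - α * β * t)) *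
        G (x - α * β * t + t))) - α⁻¹ * (Real.exp (-β * VV G x) * φ x) := by
    intro x
    have : ∫ t in (-π)..π, φ x * (Real.exp (-β * VV G (x - α * β * t)) *
        G (x - α * β * t + t)) = φ x * Real.exp (-β * VV G x) * ∫ t in (-π)..π,
      Real.exp (β * (VV G x - VV G (x - α * β * t))) * G (x - α * β * t + t) := by
      rw [← intervalIntegral.integral_const_mul]
      congr 1; ext t
      rw [show -β * VV G (x - α * β * t) = -β * VV G x + β * (VV G x - VV G (x - α * β * t)) by
        ring, Real.exp_add]
      ring
    rw [this]
    unfold HH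
    ring
  simp only [e1, e2]
  rw [intervalIntegral.integral_sub, intervalIntegral.integral_add,
    intervalIntegral.integral_sub, intervalIntegral.integral_add,
    intervalIntegral.integral_const_mul, intervalIntegral.integral_const_mul,
    intervalIntegral.integral_const_mul, intervalIntegral.integral_const_mul,
    intervalIntegral.integral_const_mul, t1, t2]
  all_goals exact Continuous.intervalIntegrable (by fun_prop) _ _

end Good

lemma integral_lam (f : 𝕋 → ℝ) :
    ∫ z, f z ∂lam = (2 * π)⁻¹ * ∫ t in (-π)..π, f (t : 𝕋) := by
  have := AddCircle.intervalIntegral_preimage (2 * π) (-π) f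
  rw [show -π + 2 * π = π by ring] at this
  rw [this, lam, integral_smul_measure, ENNReal.toReal_inv,
    ENNReal.toReal_ofReal Real.two_pi_pos.le, smul_eq_mul]

lemma rep_coe {t : ℝ} (h1 : -π < t) (h2 : t ≤ π) : rep (t : 𝕋) = t := by
  unfold rep
  exact AddCircle.equivIoc_coe_of_mem (p := 2 * π) (a := -π)
    ⟨h1, by rw [show -π + 2 * π = π by ring]; exact h2⟩

lemma coe_rep (z : 𝕋) : ((rep z : ℝ) : 𝕋) = z := AddCircle.coe_equivIoc (p := 2 * π) (a := -π)

lemma rep_meas : Measurable rep :=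
  measurable_subtype_coe.comp (AddCircle.measurableEquivIoc (2 * π) (-π)).measurable

lemma interval_congr {f g : ℝ → ℝ} (h : ∀ t, -π < t → t ≤ π → f t = g t) :
    ∫ t in (-π)..π, f t = ∫ t in (-π)..π, g t := by
  apply intervalIntegral.integral_congr_ae
  refine Filter.Eventually.of_forall fun t ht => ?_
  rw [uIoc_of_le (by linarith [Real.pi_pos])] at ht
  exact h t ht.1 ht.2

lemma integral_dens {g : 𝕋 → ℝ} (hm : Measurable g) (h0 : ∀ x, 0 ≤ g x) (f : 𝕋 → ℝ) :
    ∫ z, f z ∂(lam.withDensity fun y => ENNReal.ofReal (g y)) =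
      (2 * π)⁻¹ * ∫ t in (-π)..π, g (t : 𝕋) * f (t : 𝕋) := by
  rw [integral_withDensity_eq_integral_toReal_smul hm.ennreal_ofReal
    (Filter.Eventually.of_forall fun x => ENNReal.ofReal_lt_top)]
  simp only [ENNReal.toReal_ofReal (h0 _), smul_eq_mul]
  exact integral_lam _

lemma integral_nu {g : 𝕋 → ℝ} (hm : Measurable g) (h0 : ∀ x, 0 ≤ g x) (F : 𝕋 → ℝ) (x : ℝ) :
    ∫ y, F (y - (x : 𝕋)) ∂(lam.withDensity fun y => ENNReal.ofReal (g y)) =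
      (2 * π)⁻¹ * ∫ t in (-π)..π, g ((x + t : ℝ) : 𝕋) * F (t : 𝕋) := by
  rw [integral_dens hm h0]
  congr 1
  have p : Function.Periodic (fun t : ℝ => g (t : 𝕋) * F ((t : 𝕋) - (x : 𝕋))) (2 * π) := by
    intro t
    simp only [AddCircle.coe_add_period]
  rw [← per_shift p x]
  congr 1
  ext t
  simp

theorem adjoint_one_estimate_p_two (A : ℝ) (hA : 0 < A) :
    ∃ C : ℝ, 0 < C ∧
      ∀ (a : ℝ), 0 < a → a ≤ 1 →
      ∀ (g : 𝕋 → ℝ) (ν : Measure 𝕋), IsProbabilityMeasure ν →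
        ν = lam.withDensity (fun y => ENNReal.ofReal (g y)) →
        (∀ x, 0 ≤ g x) →
        (∀ x y : 𝕋, |g x - g y| ≤ A * dist x y ^ a) →
      ∀ (β α : ℝ), 1 ≤ β → 0 < α → α < 1 / (2 * β ^ 2) →
      ∃ h : 𝕋 → ℝ, Measurable h ∧
        (∀ x, |h x| ≤ C * max (α * β ^ 4) (α ^ a * β ^ (1 + a))) ∧
        ∀ φ : ℝ → ℝ, Function.Periodic φ (2 * π) → ContDiff ℝ 2 φ →
          ∫ z, gen2 ν α β φ z ∂(gibbs2 ν β) = ∫ z, φ (rep z) * h z ∂(gibbs2 ν β) := by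
  have hp := Real.pi_pos
  refine ⟨Good.CC A, by unfold Good.CC Good.RC; positivity, ?_⟩
  intro a ha ha1 g ν hν hνg h0 hH β α hβ hα hαβ
  have hgc : Continuous g := by
    rw [continuous_iff_continuousAt]
    intro x
    rw [ContinuousAt, tendsto_iff_dist_tendsto_zero]
    have h1 : Tendsto (fun y => A * dist y x ^ a) (nhds x) (nhds 0) := by
      have : Continuous fun y => A * dist y x ^ a := by
        have : Continuous fun y => dist y x ^ a :=
          (continuous_id.dist continuous_const).rpow_const (fun _ => Or.inr ha.le)
        fun_prop
      have := this.tendsto x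
      simpa [Real.zero_rpow ha.ne'] using this
    exact squeeze_zero (fun _ => dist_nonneg) (fun y => by rw [Real.dist_eq]; exact hH y x) h1
  have hgm := hgc.measurable
  set G : ℝ → ℝ := fun x => g (x : 𝕋) with hG
  have hgood : Good G A a := by
    refine ⟨hgc.comp (AddCircle.continuous_mk' _), fun x => ?_, fun x => h0 _, ?_, ?_, ?_⟩
    · simp only [hG, AddCircle.coe_add_period]
    · have := integral_dens hgm h0 (fun _ => 1)
      rw [← hνg] at this
      simp only [integral_const, probReal_univ, smul_eq_mul, mul_one] at this
      rw [eq_comm, inv_mul_eq_iff_eq_mul₀ (by positivity), mul_one] at this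
      exact this
    · intro x y
      refine (hH _ _).trans (mul_le_mul_of_nonneg_left ?_ hA.le)
      refine Real.rpow_le_rpow dist_nonneg ?_ ha.le
      rw [dist_eq_norm, ← AddCircle.coe_sub]
      exact QuotientAddGroup.norm_mk_le_norm
    · intro x y
      refine (hH _ _).trans (mul_le_mul_of_nonneg_left ?_ hA.le)
      have h1 : dist (x : 𝕋) (y : 𝕋) ≤ π := by
        rw [dist_eq_norm]
        refine (AddCircle.norm_le_half_period (2 * π) (by positivity)).trans ?_
        rw [abs_of_pos (by positivity)]; linarith
      calc _ ≤ π ^ a := Real.rpow_le_rpow dist_nonneg h1 ha.le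
        _ ≤ π ^ (1:ℝ) := Real.rpow_le_rpow_of_exponent_le (by linarith [Real.pi_gt_three]) ha1
        _ = π := Real.rpow_one _
  have hU : ∀ x : ℝ, U2 ν (x : 𝕋) = VV G x := by
    intro x
    have := integral_nu hgm h0 (fun y => ‖y‖ ^ 2) x
    unfold U2 VV
    rw [hνg]
    simp only [dist_comm (x : 𝕋), dist_eq_norm]
    rw [this]
    congr 1
    apply interval_congr
    intro t h1 h2
    have : ‖(t : 𝕋)‖ = |t| := by
      rw [AddCircle.norm_coe_eq_abs_iff _ (by positivity), abs_of_pos (by positivity : 0 < 2 * π)]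
      exact abs_le.2 ⟨by linarith, by linarith⟩
    rw [this, sq_abs, mul_comm]
  have hUm : Measurable (U2 ν) := by
    have : U2 ν = fun z => VV G (rep z) := by
      ext z; rw [← hU, coe_rep]
    rw [this]
    exact hgood.cont_VV.measurable.comp rep_meas
  have hZ : 0 ≤ Z2 ν β := integral_nonneg fun x => (Real.exp_pos _).le
  have hgib : ∀ f : 𝕋 → ℝ, ∫ z, f z ∂(gibbs2 ν β) = (2 * π)⁻¹ * ((Z2 ν β)⁻¹ *
      ∫ t in (-π)..π, Real.exp (-β * VV G t) * f (t : 𝕋)) := by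
    intro f
    unfold gibbs2
    rw [integral_dens (by fun_prop) (fun x => by positivity)]
    congr 1
    rw [← intervalIntegral.integral_const_mul]
    apply interval_congr
    intro t _ _
    rw [hU]; ring
  refine ⟨fun z => Good.HH G α β (rep z), (hgood.cont_HH α β).measurable.comp rep_meas,
    fun z => hgood.HH_bd hA ha ha1 hβ hα hαβ _, ?_⟩
  intro φ pφ hφ
  rw [hgib, hgib]
  congr 2
  refine Eq.trans ?_ ((hgood.adj α β pφ hφ).trans
    (interval_congr (fun t h1 h2 => by simp only [rep_coe h1 h2])))
  apply interval_congr
  intro x h1 h2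
  unfold gen2
  rw [rep_coe h1 h2, hνg,
    integral_nu hgm h0 (fun y => φ (x + α * β * rep y) - φ x) x]
  congr 4
  apply interval_congr
  intro t h1 h2
  rw [rep_coe h1 h2]
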